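/- arXiv:2105.10677 — 2 statements merged into one kernel-verified Lean document; each statement's English description precedes it below -/
import Mathlib

section
/- Let D be a regular domain and let a_s, a_t ∈ A ∖ {a_1, a_m} be alternatives with a_s ≈ a_t. If some vertex-path of Π(a_1, a_m) contains a_t, then there exists a vertex-path of Π(a_1, a_m) that contains a_s. -/
open Finset

noncomputable section

/-- A preference is a linear order over the `m` alternatives, represented as a bijection
from rank positions (0-based: position `0` is the top) to alternatives. -/
abbrev Pref (m : ℕ) := Fin m ≃ Fin m

namespace PFBRPaper

variable {m n : ℕ}

/-- `a` is strictly preferred to `b` under `P`. -/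
def Prefers (P : Pref m) (a b : Fin m) : Prop := P.symm a < P.symm b

/-- The last alternative `a_m` (0-based index `m-1`). -/
def lastAlt (m : ℕ) [NeZero m] : Fin m :=
  ⟨m - 1, Nat.sub_lt (Nat.pos_of_ne_zero (NeZero.ne m)) Nat.one_pos⟩

/-- Every alternative is top-ranked by some preference in the domain. -/
def MinimallyRich [NeZero m] (D : Set (Pref m)) : Prop :=
  ∀ a : Fin m, ∃ P ∈ D, P 0 = a

/-- The preference ranking `a_m` first, ..., `a_1` last. -/
def revPref (m : ℕ) : Pref m :=
  ⟨Fin.rev, Fin.rev, fun i => Fin.rev_rev i, fun i => Fin.rev_rev i⟩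

/-- Diversity, with the labeling convention: the domain contains the preference ranking
`a_1` first, `a_2` second, ..., `a_m` last (the identity), together with its
complete reversal. -/
def Diversity (D : Set (Pref m)) : Prop :=
  Equiv.refl (Fin m) ∈ D ∧ revPref m ∈ D

/-- Two preferences are adjacent: the alternatives at two contiguous rank positions are
swapped and everything else is unchanged. -/
def Adjacent (P P' : Pref m) : Prop :=
  P ≠ P' ∧ ∃ k : ℕ, ∃ hk : k + 1 < m,
    P ⟨k, Nat.lt_of_succ_lt hk⟩ = P' ⟨k + 1, hk⟩ ∧
    P ⟨k + 1, hk⟩ = P' ⟨k, Nat.lt_of_succ_lt hk⟩ ∧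
    ∀ l : Fin m, (l : ℕ) ≠ k → (l : ℕ) ≠ k + 1 → P l = P' l

/-- `π 0, …, π (v-1)` is a path in `D` connecting `P` and `P'`. -/
def IsPath (D : Set (Pref m)) (P P' : Pref m) (π : ℕ → Pref m) (v : ℕ) : Prop :=
  1 ≤ v ∧ (∀ i < v, π i ∈ D) ∧
  (∀ i < v, ∀ j < v, π i = π j → i = j) ∧
  π 0 = P ∧ π (v - 1) = P' ∧
  ∀ i, i + 1 < v → Adjacent (π i) (π (i + 1))

/-- The path `π 0, …, π (v-1)` has no `{a,b}`-restoration: the relative ranking of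
`a` and `b` switches at most once along the path. -/
def NoRestoration (π : ℕ → Pref m) (v : ℕ) (a b : Fin m) : Prop :=
  ∀ i j k : ℕ, i < j → j < k → k < v →
    ¬(Prefers (π i) a b ∧ Prefers (π j) b a ∧ Prefers (π k) a b) ∧
    ¬(Prefers (π i) b a ∧ Prefers (π j) a b ∧ Prefers (π k) b a)

def NoRestorationDomain (D : Set (Pref m)) : Prop :=
  ∀ P ∈ D, ∀ P' ∈ D, P ≠ P' → ∀ a b : Fin m,
    ∃ π v, IsPath D P P' π v ∧ NoRestoration π v a b

def RegularDomain [NeZero m] (D : Set (Pref m)) : Prop :=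
  MinimallyRich D ∧ Diversity D ∧ NoRestorationDomain D

/-- `a ≈ b`: the two alternatives are strongly connected in the domain `D`. -/
def StronglyConnected [NeZero m] (D : Set (Pref m)) (a b : Fin m) : Prop :=
  a ≠ b ∧ ∃ P ∈ D, ∃ P' ∈ D,
    P 0 = a ∧ P 1 = b ∧ P' 0 = b ∧ P' 1 = a ∧
    ∀ k : Fin m, 2 ≤ (k : ℕ) → P k = P' k

/-- `l` is a vertex-path of the graph `G_≈^B(D)`. -/
def IsVertexPathOn [NeZero m] (D : Set (Pref m)) (B : Set (Fin m)) (l : List (Fin m)) : Prop :=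
  l ≠ [] ∧ l.Nodup ∧ (∀ x ∈ l, x ∈ B) ∧ l.Chain' (StronglyConnected D)

/-- `l` is a vertex-path of `G_≈^B(D)` connecting `a` and `b`. -/
def VertexPathBetween [NeZero m] (D : Set (Pref m)) (B : Set (Fin m)) (a b : Fin m)
    (l : List (Fin m)) : Prop :=
  IsVertexPathOn D B l ∧ l.head? = some a ∧ l.getLast? = some b

/-- `a` is a leaf of the subgraph `G_≈^B(D)`. -/
def IsLeaf [NeZero m] (D : Set (Pref m)) (B : Set (Fin m)) (a : Fin m) : Prop :=
  a ∈ B ∧ ∃! b : Fin m, b ∈ B ∧ StronglyConnected D a b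

/-- Single-peakedness w.r.t. the natural order. -/
def SinglePeaked [NeZero m] (P : Pref m) : Prop :=
  ∀ a b : Fin m, ((a < b ∧ b < P 0) ∨ (P 0 < b ∧ b < a)) → Prefers P b a

/-- A `(p,q)`-hybrid preference (thresholds `p < q`, 0-based). -/
def IsHybridPref [NeZero m] (p q : Fin m) (P : Pref m) : Prop :=
  (∀ r s : Fin m, ((r ≤ p ∧ s ≤ p) ∨ (q ≤ r ∧ q ≤ s)) →
      ((r < s ∧ s < P 0) ∨ (P 0 < s ∧ s < r)) → Prefers P s r) ∧
  (P 0 ≤ p → ∀ l : Fin m, p ≤ l → l ≤ q → l ≠ p → Prefers P p l) ∧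
  (q ≤ P 0 → ∀ l : Fin m, p ≤ l → l ≤ q → l ≠ q → Prefers P q l)

/-- The `(p,q)`-hybrid domain of all `(p,q)`-hybrid preferences. -/
def hybridDomain [NeZero m] (p q : Fin m) : Set (Pref m) := {P | IsHybridPref p q P}

/-- `D` is a `(p,q)`-hybrid* domain. -/
def IsHybridStar [NeZero m] (D : Set (Pref m)) (p q : Fin m) : Prop :=
  D ⊆ hybridDomain p q ∧
  (∀ k : Fin m, k ≠ 0 → k ≠ lastAlt m →
      ∃ l, VertexPathBetween D Set.univ 0 (lastAlt m) l ∧ k ∈ l) ∧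
  ((p : ℕ) + 1 < (q : ℕ) → ∀ a : Fin m, ¬ IsLeaf D (Set.Icc p q) a)

/-- A lottery over the alternatives. -/
def Lottery (m : ℕ) : Type :=
  {f : Fin m → ℝ // (∀ a, 0 ≤ f a) ∧ ∑ a, f a = 1}

/-- The probability that a lottery assigns to a set of alternatives. -/
def Lottery.prob (lam : Lottery m) (B : Finset (Fin m)) : ℝ := ∑ a ∈ B, lam.1 a

/-- The support of a lottery. -/
def Lottery.supp (lam : Lottery m) : Finset (Fin m) :=
  Finset.univ.filter (fun a => 0 < lam.1 a)

/-- The degenerate lottery on `a`. -/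
def degLottery (a : Fin m) : Lottery m :=
  ⟨fun b => if b = a then 1 else 0,
   fun b => by by_cases h : b = a <;> simp [h],
   by simp⟩

/-- A profile of preferences drawn from the domain `D`. -/
abbrev Profile (D : Set (Pref m)) (n : ℕ) := Fin n → D

/-- The top-ranked alternative of a preference in the domain. -/
def topOf [NeZero m] {D : Set (Pref m)} (P : D) : Fin m := P.1 0

def Unanimous [NeZero m] {D : Set (Pref m)} (φ : Profile D n → Lottery m) : Prop :=
  ∀ (P : Profile D n) (a : Fin m), (∀ i, topOf (P i) = a) → φ P = degLottery a

/-- The total probability of the `k` top-ranked alternatives of `P` under `lam`. -/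
def topSum (lam : Lottery m) (P : Pref m) (k : ℕ) : ℝ :=
  ∑ t ∈ Finset.univ.filter (fun t : Fin m => (t : ℕ) < k), lam.1 (P t)

/-- Strategy-proofness: truth-telling first-order stochastically dominates any unilateral
misrepresentation. -/
def StrategyProof {D : Set (Pref m)} (φ : Profile D n → Lottery m) : Prop :=
  ∀ (i : Fin n) (P : Profile D n) (Pi' : D) (k : ℕ), k ≤ m →
    topSum (φ (Function.update P i Pi')) (P i).1 k ≤ topSum (φ P) (P i).1 k

def TopsOnly [NeZero m] {D : Set (Pref m)} (φ : Profile D n → Lottery m) : Prop :=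
  ∀ P P' : Profile D n, (∀ i, topOf (P i) = topOf (P' i)) → φ P = φ P'

def Anonymous {D : Set (Pref m)} (φ : Profile D n → Lottery m) : Prop :=
  ∀ (P : Profile D n) (σ : Equiv.Perm (Fin n)), φ (P ∘ σ) = φ P

/-- The interval `[a_k, a_m]`. -/
def upSet (k : Fin m) : Finset (Fin m) := Finset.univ.filter (fun a => k ≤ a)

/-- The interval `[a_1, a_k]`. -/
def downSet (k : Fin m) : Finset (Fin m) := Finset.univ.filter (fun a => a ≤ k)

/-- The interval `[a_p, a_q]`. -/
def midSet (p q : Fin m) : Finset (Fin m) := Finset.univ.filter (fun a => p ≤ a ∧ a ≤ q)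

/-- `S(k,P)`: the voters whose preference top is not to the left of `a_k`. -/
def voterSet [NeZero m] {D : Set (Pref m)} (P : Profile D n) (k : Fin m) : Finset (Fin n) :=
  Finset.univ.filter (fun i => k ≤ topOf (P i))

/-- `β_{S(k,P)}([a_k, a_m])`, with the convention that it is `0` for `k = m`. -/
def tailProb [NeZero m] {D : Set (Pref m)} (β : Finset (Fin n) → Lottery m)
    (P : Profile D n) (k : ℕ) : ℝ :=
  if h : k < m then (β (voterSet P ⟨k, h⟩)).prob (upSet ⟨k, h⟩) else 0

def BallotUnanimity [NeZero m] (β : Finset (Fin n) → Lottery m) : Prop :=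
  β Finset.univ = degLottery (lastAlt m) ∧ β ∅ = degLottery 0

def BallotMonotone (β : Finset (Fin n) → Lottery m) : Prop :=
  ∀ S T : Finset (Fin n), S ⊂ T →
    ∀ k : Fin m, (β S).prob (upSet k) ≤ (β T).prob (upSet k)

/-- `φ` is a probabilistic fixed ballot rule with probabilistic ballots `β`. -/
def IsPFBRWith [NeZero m] {D : Set (Pref m)} (φ : Profile D n → Lottery m)
    (β : Finset (Fin n) → Lottery m) : Prop :=
  BallotUnanimity β ∧ BallotMonotone β ∧
  ∀ (P : Profile D n) (k : Fin m),
    (φ P).1 k = tailProb β P (k : ℕ) - tailProb β P ((k : ℕ) + 1)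

def IsPFBR [NeZero m] {D : Set (Pref m)} (φ : Profile D n → Lottery m) : Prop :=
  ∃ β, IsPFBRWith φ β

/-- The constrained random-dictatorship condition w.r.t. `a_p` and `a_q`. -/
def ConstrainedRD (p q : Fin m) (β : Finset (Fin n) → Lottery m) : Prop :=
  ∃ ε : Fin n → ℝ, (∀ i, 0 ≤ ε i) ∧ ∑ i, ε i = 1 ∧
    ∀ S : Finset (Fin n),
      (β S).prob (upSet q) = ∑ i ∈ S, ε i ∧
      (β S).prob (downSet p) = ∑ i ∈ Sᶜ, ε i

/-- The constrained random-dictatorship condition w.r.t. `a_p` and `a_q` with every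
conditional dictatorial coefficient equal to `1/n`. -/
def ConstrainedRDUniform (p q : Fin m) (β : Finset (Fin n) → Lottery m) : Prop :=
  ∀ S : Finset (Fin n),
    (β S).prob (upSet q) = (S.card : ℝ) / (n : ℝ) ∧
    (β S).prob (downSet p) = ((Sᶜ : Finset (Fin n)).card : ℝ) / (n : ℝ)

/-- Anonymity at the level of probabilistic ballots. -/
def BallotAnonymous (β : Finset (Fin n) → Lottery m) : Prop :=
  ∀ S S' : Finset (Fin n), S.Nonempty → S'.Nonempty → S.card = S'.card → β S = β S'

/-- Per-capita monotonicity w.r.t. `a_p` and `a_q`. -/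
def PerCapitaMonotone (p q : Fin m) (β : Finset (Fin n) → Lottery m) : Prop :=
  ∀ S S' : Finset (Fin n), S.Nonempty → S ⊂ S' → S' ⊂ Finset.univ →
    (∀ t : Fin m, q ≤ t →
      (β S).prob (upSet t) / (S.card : ℝ) ≤ (β S').prob (upSet t) / (S'.card : ℝ)) ∧
    (∀ s : Fin m, s ≤ p →
      (β Sᶜ).prob (downSet s) / (S.card : ℝ) ≤ (β S'ᶜ).prob (downSet s) / (S'.card : ℝ))

/-- Decomposability: `φ` is a mixture of finitely many unanimous and strategy-proof
deterministic social choice functions. -/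
def Decomposable [NeZero m] {D : Set (Pref m)} (φ : Profile D n → Lottery m) : Prop :=
  ∃ (r : ℕ) (f : Fin r → (Profile D n → Fin m)) (α : Fin r → ℝ),
    (∀ k, 0 < α k) ∧ ∑ k, α k = 1 ∧
    (∀ k, Unanimous (fun P => degLottery (f k P)) ∧
          StrategyProof (fun P => degLottery (f k P))) ∧
    ∀ (P : Profile D n) (a : Fin m),
      (φ P).1 a = ∑ k, α k * (if f k P = a then 1 else 0)

/-- `b̂_S^R`: the `≺`-minimum of `supp(β_S) ∩ R` (with the convention `b̂_N^R = a_m`). -/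
def bR [NeZero m] (β : Finset (Fin n) → Lottery m) (q : Fin m) (S : Finset (Fin n)) : Fin m :=
  if h : ((β S).supp ∩ upSet q).Nonempty then ((β S).supp ∩ upSet q).min' h else lastAlt m

/-- `b̂_S^L`: the `≺`-maximum of `supp(β_S) ∩ L` (with the convention `b̂_∅^L = a_1`). -/
def bL [NeZero m] (β : Finset (Fin n) → Lottery m) (p : Fin m) (S : Finset (Fin n)) : Fin m :=
  if h : ((β S).supp ∩ downSet p).Nonempty then ((β S).supp ∩ downSet p).max' h else 0

/-- `α = min over nonempty S ⊂ N of min(β_S(b̂_S^R)/|S|, β_S(b̂_S^L)/(n-|S|))`. -/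
def alphaVal [NeZero m] (β : Finset (Fin n) → Lottery m) (p q : Fin m) : ℝ :=
  sInf {x : ℝ | ∃ S : Finset (Fin n), S.Nonempty ∧ S ≠ Finset.univ ∧
    x = min ((β S).1 (bR β q S) / (S.card : ℝ))
            ((β S).1 (bL β p S) / ((n : ℝ) - (S.card : ℝ)))}

/-- `γ_S = (|S|/n) e_{b̂_S^R} + ((n-|S|)/n) e_{b̂_S^L}`, pointwise. -/
def gammaFun [NeZero m] (β : Finset (Fin n) → Lottery m) (p q : Fin m)
    (S : Finset (Fin n)) (a : Fin m) : ℝ :=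
  ((S.card : ℝ) / (n : ℝ)) * (if a = bR β q S then 1 else 0)
  + (((n : ℝ) - (S.card : ℝ)) / (n : ℝ)) * (if a = bL β p S then 1 else 0)

/-- The max-min formula `f(P) = max_{S ⊆ N} min({r_1(P_j) : j ∈ S} ∪ {b_S})`. -/
def fbrOutcome [NeZero m] {D : Set (Pref m)} (b : Finset (Fin n) → Fin m)
    (P : Profile D n) : Fin m :=
  Finset.univ.sup' Finset.univ_nonempty
    (fun S : Finset (Fin n) =>
      (insert (b S) (S.image (fun j => topOf (P j)))).inf' (Finset.insert_nonempty _ _) id)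

/-- `f` is a `(p,q)`-fixed ballot rule with deterministic ballots `b` and constrained
dictator `i`. -/
def IsFBRWith [NeZero m] {D : Set (Pref m)} (p q : Fin m) (f : Profile D n → Fin m)
    (b : Finset (Fin n) → Fin m) (i : Fin n) : Prop :=
  b Finset.univ = lastAlt m ∧ b ∅ = 0 ∧
  (∀ S T : Finset (Fin n), S ⊂ T → b S ≤ b T) ∧
  (∀ S : Finset (Fin n), (i ∈ S → q ≤ b S) ∧ (i ∉ S → b S ≤ p)) ∧
  ∀ P : Profile D n, f P = fbrOutcome b P

end PFBRPaper

open PFBRPaper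

/-! Let `Q ∈ D` witness `s ≈ t`, so that `Q` ranks `s` first. The two completely reversed
preferences in `D` have the tops `a_1` and `a_m`, and one of them, `T`, ranks `s` above `t`. Along
a path in `D` from `Q` to `T` without `{s, t}`-restoration `s` stays above `t`, so `t` is never on
top. Adjacent preferences with different tops strongly connect these tops, hence the tops along the
path form a walk from `s` to an end of the given vertex-path that avoids `t`. The edge `t ≈ s`
followed by this walk, up to its first return to the vertex-path, is a detour through `s` which
replaces a segment of the vertex-path. -/

namespace PFBRPaper

section SimplePaths

variable {α : Type*} {R : α → α → Prop} {a b s t y : α} {l l₁ l₂ l₃ q : List α}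

/-- `l` lists the vertices of a path from `a` to `b` without repeated vertices in the graph of the
relation `R`; a single vertex is a path from itself to itself. -/
structure IsSimplePath (R : α → α → Prop) (a b : α) (l : List α) : Prop where
  nodup : l.Nodup
  isChain : l.IsChain R
  head?_eq : l.head? = some a
  getLast?_eq : l.getLast? = some b

namespace IsSimplePath

theorem reverse [Std.Symm R] (hl : IsSimplePath R a b l) :
    IsSimplePath R b a l.reverse where
  nodup := List.nodup_reverse.2 hl.nodup
  isChain := List.isChain_reverse.2 (hl.isChain.imp fun _ _ => symm_of R)
  head?_eq := by simpa using hl.getLast?_eq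
  getLast?_eq := by simpa using hl.head?_eq

theorem replace_segment (hl : IsSimplePath R a b (l₁ ++ t :: (l₂ ++ y :: l₃)))
    (hq : IsSimplePath R t y (t :: q ++ [y]))
    (hdisj : q.Disjoint (l₁ ++ t :: (l₂ ++ y :: l₃))) :
    IsSimplePath R a b (l₁ ++ t :: (q ++ y :: l₃)) where
  nodup := by
    have hkept : (l₁ ++ [t] ++ y :: l₃).Sublist (l₁ ++ t :: (l₂ ++ y :: l₃)) := by simp
    have hqnodup : q.Nodup := hq.nodup.sublist (by simp)
    have hnodup : (q ++ (l₁ ++ [t] ++ y :: l₃)).Nodup :=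
      hqnodup.append (hl.nodup.sublist hkept) (List.disjoint_of_subset_right hkept.subset hdisj)
    simpa using (List.perm_append_comm_assoc q (l₁ ++ [t]) (y :: l₃)).nodup_iff.1 hnodup
  isChain := by
    have hstart : (l₁ ++ [t]).IsChain R := (List.isChain_split.1 hl.isChain).1
    have hend : (y :: l₃).IsChain R :=
      (List.isChain_split.1 hl.isChain).2.right_of_append (l₁ := t :: l₂)
    exact List.isChain_split.2 ⟨hstart, List.isChain_split (l₁ := t :: q).2 ⟨hq.isChain, hend⟩⟩
  head?_eq := by simpa using hl.head?_eq
  getLast?_eq := by simpa [List.getLast?_cons] using hl.getLast?_eq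

theorem exists_subset_of_segment [Std.Symm R] (hl : IsSimplePath R a b l)
    (ht : t ∈ l) (hy : y ∈ l) (hq : IsSimplePath R t y (t :: q ++ [y])) (hdisj : q.Disjoint l) :
    ∃ l', IsSimplePath R a b l' ∧ q ⊆ l' := by
  have hyt : y ≠ t := by
    rintro rfl
    simpa using hq.nodup
  obtain ⟨l₁, l₂, rfl⟩ := List.append_of_mem ht
  rcases List.mem_append.1 hy with hbefore | hafter
  · obtain ⟨l₃, l₄, rfl⟩ := List.append_of_mem hbefore
    have hq' : IsSimplePath R y t (y :: q.reverse ++ [t]) := by simpa using hq.reverse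
    rw [List.append_assoc, List.cons_append] at hl hdisj
    exact ⟨_, hl.replace_segment hq' (by simpa using hdisj), fun z hz => by simp [hz]⟩
  · obtain ⟨l₃, l₄, rfl⟩ := List.append_of_mem (List.mem_of_ne_of_mem hyt hafter)
    exact ⟨_, hl.replace_segment hq hdisj, fun z hz => by simp [hz]⟩

end IsSimplePath

theorem exists_isSimplePath_of_reflTransGen {S : Set α} {x y₀ : α}
    (hwalk : Relation.ReflTransGen R x y₀) (hy₀ : y₀ ∈ S) (hx : x ∉ S) :
    ∃ p y, y ∈ S ∧ IsSimplePath R x y (x :: p ++ [y]) ∧ ∀ z ∈ x :: p, z ∉ S := by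
  induction hwalk using Relation.ReflTransGen.head_induction_on with
  | refl => exact absurd hy₀ hx
  | @head x x' hxx' _ ih =>
    by_cases hx' : x' ∈ S
    · have hne : x ≠ x' := fun h => hx (h ▸ hx')
      exact ⟨[], x', hx', ⟨by simpa using hne, by simpa using hxx', rfl, rfl⟩, by simpa using hx⟩
    obtain ⟨p, y, hy, hp, hpS⟩ := ih hx'
    by_cases hxp : x ∈ x' :: p
    · obtain ⟨u, v, huv⟩ := List.append_of_mem hxp
      have hsuffix : x :: v ++ [y] <:+ x' :: p ++ [y] := ⟨u, by rw [huv, List.append_assoc]⟩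
      exact ⟨v, y, hy, ⟨hp.nodup.sublist hsuffix.sublist, hp.isChain.suffix hsuffix, rfl,
        List.getLast?_concat⟩, fun z hz => hpS z (huv ▸ List.mem_append_right u hz)⟩
    · have hxy : x ≠ y := fun h => hx (h ▸ hy)
      refine ⟨x' :: p, y, hy, ⟨?_, hp.isChain.cons_cons hxx', rfl, List.getLast?_concat⟩, ?_⟩
      · exact List.nodup_cons.2 ⟨by simpa [hxy] using hxp, hp.nodup⟩
      · exact List.forall_mem_cons.2 ⟨hx, hpS⟩

theorem IsSimplePath.exists_mem_of_reflTransGen [Std.Symm R] (hl : IsSimplePath R a b l)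
    (ht : t ∈ l) (hts : R t s) (hy : y ∈ l)
    (hwalk : Relation.ReflTransGen (fun u v => R u v ∧ v ≠ t) s y) :
    ∃ l', IsSimplePath R a b l' ∧ s ∈ l' := by
  by_cases hs : s ∈ l
  · exact ⟨l, hl, hs⟩
  obtain ⟨p, z, hz, hp, hpl⟩ :=
    exists_isSimplePath_of_reflTransGen (S := {v | v ∈ l}) hwalk hy hs
  have hzt : z ≠ t :=
    ((List.isChain_append.1 hp.isChain).2.2 _ (List.getLast_mem_getLast? (by simp)) z rfl).2
  have htp : t ∉ s :: p := fun h => hpl t h ht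
  have hsegment : IsSimplePath R t z (t :: (s :: p) ++ [z]) :=
    ⟨List.nodup_cons.2 ⟨by simpa [hzt.symm] using htp, hp.nodup⟩,
      (hp.isChain.imp fun _ _ h => h.1).cons_cons hts, rfl, List.getLast?_concat⟩
  obtain ⟨l', hl', hsub⟩ := hl.exists_subset_of_segment ht hz hsegment hpl
  exact ⟨l', hl', hsub (by simp)⟩

end SimplePaths

section Preferences

variable {m : ℕ} {D : Set (Pref m)} {P P' : Pref m} {π : ℕ → Pref m} {v : ℕ} {a b s t : Fin m}

theorem Prefers.asymm (h : Prefers P a b) : ¬ Prefers P b a :=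
  lt_asymm h

theorem prefers_or_prefers (P : Pref m) (hab : a ≠ b) : Prefers P a b ∨ Prefers P b a :=
  lt_or_gt_of_ne (P.symm.injective.ne hab)

theorem NoRestoration.prefers (h : NoRestoration π v a b) (h₀ : Prefers (π 0) a b)
    (hlast : Prefers (π (v - 1)) a b) {i : ℕ} (hi : i < v) : Prefers (π i) a b := by
  have hab : a ≠ b := by
    rintro rfl
    exact h₀.asymm h₀
  refine (prefers_or_prefers (π i) hab).resolve_right fun hba => ?_
  have hi₀ : i ≠ 0 := by
    rintro rfl
    exact h₀.asymm hba
  have hilast : i ≠ v - 1 := by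
    rintro rfl
    exact hlast.asymm hba
  exact (h 0 i (v - 1) (by omega) (by omega) (by omega)).1 ⟨h₀, hba, hlast⟩

variable [NeZero m]

theorem revPref_zero : revPref m 0 = lastAlt m := by
  apply Fin.ext
  simp [revPref, lastAlt]

theorem prefers_of_top_eq (hP : P 0 = a) (hab : a ≠ b) : Prefers P a b := by
  have ha : P.symm a = 0 := by rw [← hP, Equiv.symm_apply_apply]
  have hb : P.symm b ≠ 0 := fun h => hab (P.symm.injective (ha.trans h.symm))
  rw [Prefers, ha]
  exact Fin.pos_iff_ne_zero.2 hb

theorem Prefers.top_ne (h : Prefers P a b) : P 0 ≠ b := by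
  rintro rfl
  simp [Prefers] at h

theorem StronglyConnected.symm (h : StronglyConnected D a b) : StronglyConnected D b a := by
  obtain ⟨hab, P, hP, P', hP', hPa, hPb, hP'b, hP'a, hrest⟩ := h
  exact ⟨hab.symm, P', hP', P, hP, hP'b, hP'a, hPa, hPb, fun k hk => (hrest k hk).symm⟩

instance : Std.Symm (StronglyConnected D) :=
  ⟨fun _ _ h => h.symm⟩

theorem Adjacent.stronglyConnected (h : Adjacent P P') (hP : P ∈ D) (hP' : P' ∈ D)
    (htop : P 0 ≠ P' 0) : StronglyConnected D (P 0) (P' 0) := by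
  obtain ⟨-, k, hk, hfst, hsnd, hrest⟩ := h
  obtain rfl : k = 0 := by
    by_contra hk₀
    exact htop (hrest 0 (by simpa using Ne.symm hk₀) (by simp))
  have hone : (⟨0 + 1, hk⟩ : Fin m) = 1 := Fin.ext (by simp [Nat.mod_eq_of_lt hk])
  rw [hone] at hfst hsnd
  exact ⟨htop, P, hP, P', hP', rfl, hsnd, rfl, hfst.symm,
    fun l hl => hrest l (by omega) (by omega)⟩

theorem IsPath.reflTransGen_top {p : Fin m → Prop} (h : IsPath D P P' π v)
    (hp : ∀ i < v, p (π i 0)) :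
    Relation.ReflTransGen (fun x y => StronglyConnected D x y ∧ p y) (P 0) (P' 0) := by
  obtain ⟨hv, hmem, -, rfl, rfl, hadj⟩ := h
  have hprefix (i : ℕ) (hi : i < v) :
      Relation.ReflTransGen (fun x y => StronglyConnected D x y ∧ p y) (π 0 0) (π i 0) := by
    induction i with
    | zero => exact .refl
    | succ i ih =>
      have hi' : i < v := by omega
      by_cases htop : π i 0 = π (i + 1) 0
      · exact htop ▸ ih hi'
      · exact (ih hi').tail
          ⟨(hadj i hi).stronglyConnected (hmem i hi') (hmem _ hi) htop, hp _ hi⟩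
  exact hprefix (v - 1) (by omega)

theorem NoRestorationDomain.reflTransGen_top_avoiding (hD : NoRestorationDomain D)
    (hP : P ∈ D) (hP' : P' ∈ D) (hPst : Prefers P s t) (hP'st : Prefers P' s t) :
    Relation.ReflTransGen (fun x y => StronglyConnected D x y ∧ y ≠ t) (P 0) (P' 0) := by
  by_cases hne : P = P'
  · rw [hne]
  obtain ⟨π, v, hπ, hnr⟩ := hD P hP P' hP' hne s t
  have hfirst : π 0 = P := hπ.2.2.2.1
  have hlast : π (v - 1) = P' := hπ.2.2.2.2.1
  exact hπ.reflTransGen_top fun i hi =>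
    (hnr.prefers (hfirst ▸ hPst) (hlast ▸ hP'st) hi).top_ne

theorem vertexPathBetween_univ_iff {l : List (Fin m)} :
    VertexPathBetween D Set.univ a b l ↔ IsSimplePath (StronglyConnected D) a b l := by
  constructor
  · rintro ⟨⟨-, hnodup, -, hchain⟩, hhead, hlast⟩
    exact ⟨hnodup, hchain, hhead, hlast⟩
  · intro h
    have hnil : l ≠ [] := by
      rintro rfl
      simpa using h.head?_eq
    exact ⟨⟨hnil, h.nodup, fun x _ => Set.mem_univ x, h.isChain⟩, h.head?_eq, h.getLast?_eq⟩

theorem exists_vertexPathBetween_mem_of_prefers (hD : NoRestorationDomain D)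
    (hst : StronglyConnected D s t) {l : List (Fin m)} (hl : VertexPathBetween D Set.univ a b l)
    (ht : t ∈ l) (hP : P ∈ D) (hPst : Prefers P s t) (htop : P 0 ∈ l) :
    ∃ l', VertexPathBetween D Set.univ a b l' ∧ s ∈ l' := by
  obtain ⟨Q, hQ, hQs⟩ : ∃ Q ∈ D, Q 0 = s := by
    obtain ⟨-, Q, hQ, -, -, hQs, -⟩ := hst
    exact ⟨Q, hQ, hQs⟩
  have hwalk := hD.reflTransGen_top_avoiding hQ hP (prefers_of_top_eq hQs hst.1) hPst
  rw [hQs] at hwalk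
  simp only [vertexPathBetween_univ_iff] at hl ⊢
  exact hl.exists_mem_of_reflTransGen ht hst.symm htop hwalk

end Preferences

end PFBRPaper

theorem one_step_general {m : ℕ} [NeZero m] (D : Set (Pref m)) (hdiv : Diversity D)
    (hD : NoRestorationDomain D) (s t : Fin m) (hst : StronglyConnected D s t)
    (h : ∃ l, VertexPathBetween D Set.univ 0 (lastAlt m) l ∧ t ∈ l) :
    ∃ l, VertexPathBetween D Set.univ 0 (lastAlt m) l ∧ s ∈ l := by
  obtain ⟨l, hl, ht⟩ := h
  rcases lt_or_gt_of_ne hst.1 with hlt | hgt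
  · have hfirst : Equiv.refl (Fin m) 0 ∈ l := List.mem_of_mem_head? hl.2.1
    exact exists_vertexPathBetween_mem_of_prefers hD hst hl ht hdiv.1 hlt hfirst
  · have hrev : Prefers (revPref m) s t := Fin.rev_lt_rev.2 hgt
    have hlast : revPref m 0 ∈ l := by
      rw [revPref_zero]
      exact List.mem_of_mem_getLast? hl.2.2
    exact exists_vertexPathBetween_mem_of_prefers hD hst hl ht hdiv.2 hrev hlast

/-- If `s ≈ t` for interior alternatives `s, t` and some vertex-path of
`Π(a_1, a_m)` contains `t`, then some vertex-path of `Π(a_1, a_m)` contains `s`. -/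
theorem one_step (m : ℕ) [NeZero m] (hm : 3 ≤ m)
    (D : Set (Pref m)) (hD : RegularDomain D)
    (s t : Fin m) (hs0 : s ≠ 0) (hsm : s ≠ lastAlt m)
    (ht0 : t ≠ 0) (htm : t ≠ lastAlt m)
    (hst : StronglyConnected D s t)
    (h : ∃ l, VertexPathBetween D Set.univ 0 (lastAlt m) l ∧ t ∈ l) :
    ∃ l, VertexPathBetween D Set.univ 0 (lastAlt m) l ∧ s ∈ l :=
  one_step_general D hD.2.1 hD.2.2 s t hst h
end
end

section
/- (Uncompromising property.) Let D be a domain of preferences over A and let φ : D^n → Δ(A) be a unanimous, tops-only and strategy-proof RSCF. Let {x_1, …, x_t} be a vertex-path of G_≈^A(D), let i ∈ N, let P_{-i} ∈ D^{n−1}, and let P_i, P_i′ ∈ D with r_1(P_i) = x_1 and r_1(P_i′) = x_t. Then φ_{a_s}(P_i, P_{-i}) = φ_{a_s}(P_i′, P_{-i}) for every alternative a_s ∉ {x_1, …, x_t}, and consequently Σ_{k=1}^{t} φ_{x_k}(P_i, P_{-i}) = Σ_{k=1}^{t} φ_{x_k}(P_i′, P_{-i}). -/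
open Finset

noncomputable section

open PFBRPaper

/-!
If two preferences agree from some rank on, then the alternatives above that rank form the same
set in both, so strategy-proofness, applied in both directions, forces the probability of that set
to be unchanged when a voter moves from one preference to the other. Taking differences over
successive ranks, every single alternative from that rank on keeps its probability. Two
preferences witnessing `x ≈ y` agree from the third rank on, where all alternatives other than `x`
and `y` lie, and tops-onlyness lets a voter pass between any two preferences with the same top for
free; so one can travel along a vertex-path without affecting the alternatives off it.
-/

namespace PFBRPaper

variable {m n : ℕ}

lemma two_le_val_of_ne_zero_of_ne_one [NeZero m] {t : Fin m} (h0 : t ≠ 0) (h1 : t ≠ 1) :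
    2 ≤ (t : ℕ) := by
  refine (Nat.two_le_iff _).mpr ⟨mt Fin.val_eq_zero_iff.mp h0, fun ht => h1 (Fin.ext ?_)⟩
  rw [Fin.val_one', Nat.mod_eq_of_lt (ht ▸ t.is_lt), ht]

lemma Lottery.prob_eq_one_sub_prob_compl (lam : Lottery m) (B : Finset (Fin m)) :
    lam.prob B = 1 - lam.prob Bᶜ :=
  eq_sub_of_add_eq ((sum_add_sum_compl B lam.1).trans lam.2.2)

lemma Lottery.prob_congr_of_notMem {lam mu : Lottery m} {B : Finset (Fin m)}
    (h : ∀ a ∉ B, lam.1 a = mu.1 a) : lam.prob B = mu.prob B := by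
  rw [lam.prob_eq_one_sub_prob_compl, mu.prob_eq_one_sub_prob_compl]
  exact congrArg (1 - ·) (sum_congr rfl fun a ha => h a (mem_compl.mp ha))

lemma topSum_succ (lam : Lottery m) (P : Pref m) (t : Fin m) :
    topSum lam P (t + 1) = topSum lam P t + lam.1 (P t) := by
  have insert_rank : univ.filter (fun s : Fin m => (s : ℕ) < t + 1)
      = insert t (univ.filter (fun s : Fin m => (s : ℕ) < t)) := by
    ext s
    simp only [mem_filter, mem_univ, true_and, mem_insert, Fin.ext_iff]
    omega
  rw [topSum, topSum, insert_rank, sum_insert (by simp), add_comm]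

lemma topSum_eq_one_sub (lam : Lottery m) (P : Pref m) (k : ℕ) :
    topSum lam P k = 1 - ∑ t ∈ univ.filter (fun t : Fin m => k ≤ t), lam.1 (P t) := by
  have total : ∑ t, lam.1 (P t) = 1 := (P.sum_comp lam.1).trans lam.2.2
  have split := sum_filter_add_sum_filter_not univ (fun t : Fin m => (t : ℕ) < k)
    fun t => lam.1 (P t)
  simp only [not_lt] at split
  exact eq_sub_of_add_eq (split.trans total)

lemma topSum_congr_of_agree_from (lam : Lottery m) {P P' : Pref m} {k : ℕ}
    (h : ∀ t : Fin m, k ≤ t → P t = P' t) : topSum lam P k = topSum lam P' k := by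
  rw [topSum_eq_one_sub, topSum_eq_one_sub]
  refine congrArg (1 - ·) (sum_congr rfl fun t ht => ?_)
  rw [h t (mem_filter.mp ht).2]

section UnilateralChange

variable {D : Set (Pref m)} {φ : Profile D n → Lottery m} (i : Fin n) (P : Profile D n)

lemma StrategyProof.topSum_update_eq (hsp : StrategyProof φ) {Q Q' : D} {k : ℕ} (hk : k ≤ m)
    (h : ∀ t : Fin m, k ≤ t → Q.1 t = Q'.1 t) :
    topSum (φ (Function.update P i Q)) Q.1 k = topSum (φ (Function.update P i Q')) Q.1 k := by
  have no_gain (R R' : D) : topSum (φ (Function.update P i R')) R.1 k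
      ≤ topSum (φ (Function.update P i R)) R.1 k := by
    simpa using hsp i (Function.update P i R) R' k hk
  refine le_antisymm ?_ (no_gain Q Q')
  simpa only [topSum_congr_of_agree_from _ h] using no_gain Q' Q

lemma StrategyProof.apply_update_eq (hsp : StrategyProof φ) {Q Q' : D} (t : Fin m)
    (h : ∀ s : Fin m, t ≤ s → Q.1 s = Q'.1 s) :
    (φ (Function.update P i Q)).1 (Q.1 t) = (φ (Function.update P i Q')).1 (Q.1 t) := by
  have above := hsp.topSum_update_eq i P t.is_lt.le h
  have through := hsp.topSum_update_eq i P t.is_lt fun s hs => h s (Nat.le_of_succ_le hs)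
  simpa only [Nat.succ_eq_add_one, topSum_succ, above, add_right_inj] using through

variable [NeZero m]

lemma TopsOnly.update_eq (hto : TopsOnly φ) {Q Q' : D} (h : topOf Q = topOf Q') :
    φ (Function.update P i Q) = φ (Function.update P i Q') := by
  refine hto _ _ fun j => ?_
  rcases eq_or_ne j i with rfl | hj
  · simpa only [Function.update_self] using h
  · simp only [Function.update_of_ne hj]

lemma StronglyConnected.apply_update_eq (hto : TopsOnly φ) (hsp : StrategyProof φ) {Q Q' : D}
    (h : StronglyConnected D (topOf Q) (topOf Q')) {a : Fin m}
    (ha : a ≠ topOf Q) (ha' : a ≠ topOf Q') :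
    (φ (Function.update P i Q)).1 a = (φ (Function.update P i Q')).1 a := by
  obtain ⟨-, R, hR, R', hR', top, second, top', -, agree⟩ := h
  rw [hto.update_eq i P (Q := Q) (Q' := ⟨R, hR⟩) top.symm,
    hto.update_eq i P (Q := Q') (Q' := ⟨R', hR'⟩) top'.symm]
  obtain ⟨t, rfl⟩ := R.surjective a
  have ht : 2 ≤ (t : ℕ) := two_le_val_of_ne_zero_of_ne_one
    (by rintro rfl; exact ha top) (by rintro rfl; exact ha' second)
  exact hsp.apply_update_eq i P (Q := ⟨R, hR⟩) (Q' := ⟨R', hR'⟩) t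
    fun s hs => agree s (ht.trans hs)

lemma apply_update_eq_of_isChain (hto : TopsOnly φ) (hsp : StrategyProof φ)
    {l : List (Fin m)} (hl : l.IsChain (StronglyConnected D)) {Q Q' : D}
    (hQ : l.head? = some (topOf Q)) (hQ' : l.getLast? = some (topOf Q'))
    {a : Fin m} (ha : a ∉ l) :
    (φ (Function.update P i Q)).1 a = (φ (Function.update P i Q')).1 a := by
  induction hl generalizing Q with
  | nil => simp at hQ
  | singleton x =>
    simp only [List.head?_cons, List.getLast?_singleton, Option.some.injEq] at hQ hQ'
    rw [hto.update_eq i P (hQ.symm.trans hQ')]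
  | @cons_cons x y l hxy _ ih =>
    obtain rfl : x = topOf Q := by simpa using hQ
    obtain ⟨R, rfl⟩ : ∃ R : D, topOf R = y :=
      let ⟨_, _, _, R, hR, _, _, top, _⟩ := hxy
      ⟨⟨R, hR⟩, top⟩
    obtain ⟨haQ, hal⟩ := List.ne_and_not_mem_of_not_mem_cons ha
    calc (φ (Function.update P i Q)).1 a
        = (φ (Function.update P i R)).1 a :=
          hxy.apply_update_eq i P hto hsp haQ (List.ne_of_not_mem_cons hal)
      _ = (φ (Function.update P i Q')).1 a := ih rfl (by simpa using hQ') hal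

end UnilateralChange

end PFBRPaper

theorem uncompromising_general {m n : ℕ} [NeZero m] {D : Set (Pref m)}
    {φ : Profile D n → Lottery m} (hto : TopsOnly φ) (hsp : StrategyProof φ)
    {B : Set (Fin m)} {l : List (Fin m)} (hl : IsVertexPathOn D B l)
    (i : Fin n) (P : Profile D n) {Pi Pi' : D}
    (hPi : l.head? = some (topOf Pi)) (hPi' : l.getLast? = some (topOf Pi')) :
    (∀ a : Fin m, a ∉ l →
        (φ (Function.update P i Pi)).1 a = (φ (Function.update P i Pi')).1 a) ∧
    (l.map (fun x => (φ (Function.update P i Pi)).1 x)).sum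
      = (l.map (fun x => (φ (Function.update P i Pi')).1 x)).sum := by
  obtain ⟨-, nodup, -, chain⟩ := hl
  have off_path (a : Fin m) (ha : a ∉ l) :
      (φ (Function.update P i Pi)).1 a = (φ (Function.update P i Pi')).1 a :=
    apply_update_eq_of_isChain i P hto hsp chain hPi hPi' ha
  refine ⟨off_path, ?_⟩
  rw [← List.sum_toFinset _ nodup, ← List.sum_toFinset _ nodup]
  exact Lottery.prob_congr_of_notMem fun a ha => off_path a (mt List.mem_toFinset.mpr ha)

/-- Uncompromising property: a unanimous, tops-only and strategy-proof
RSCF assigns the same probability to every alternative off a vertex-path when one voter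
moves her top from one end of the path to the other. -/
theorem uncompromising (m n : ℕ) [NeZero m] (hm : 3 ≤ m) (hn : 2 ≤ n)
    (D : Set (Pref m)) (φ : Profile D n → Lottery m)
    (hu : Unanimous φ) (hto : TopsOnly φ) (hsp : StrategyProof φ)
    (l : List (Fin m)) (hl : IsVertexPathOn D Set.univ l)
    (i : Fin n) (P : Profile D n) (Pi Pi' : D)
    (hPi : l.head? = some (topOf Pi)) (hPi' : l.getLast? = some (topOf Pi')) :
    (∀ a : Fin m, a ∉ l →
        (φ (Function.update P i Pi)).1 a = (φ (Function.update P i Pi')).1 a) ∧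
    (l.map (fun x => (φ (Function.update P i Pi)).1 x)).sum
      = (l.map (fun x => (φ (Function.update P i Pi')).1 x)).sum :=
  uncompromising_general hto hsp hl i P hPi hPi'
end
end
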